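/- Let n be a prime number and let q be a prime power with q ≡ 1 (mod n). Then the cardinality of Res_n(F_q) equals q^{2n−1} + (n−1)·q^n. -/

import Mathlib

open Polynomial

/-- The resultant `Res(φ, ψ)` of a monic polynomial `φ` and a polynomial `ψ`, computed
(inside the algebraic closure) as the product `∏ ψ(αᵢ)` over the roots `αᵢ` of `φ`,
counted with multiplicity. -/
noncomputable def resultantAC {k : Type*} [Field k] (φ ψ : k[X]) : AlgebraicClosure k :=
  (((φ.map (algebraMap k (AlgebraicClosure k))).roots).map
    fun α => (ψ.map (algebraMap k (AlgebraicClosure k))).eval α).prod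

/-- `Res_n(k)`: the set of pairs `(φ, ψ)` of monic degree-`n` polynomials over `k`
with `Res(φ, ψ) = 1`. -/
def ResPairs (k : Type*) [Field k] (n : ℕ) : Set (k[X] × k[X]) :=
  {p | p.1.Monic ∧ p.1.natDegree = n ∧ p.2.Monic ∧ p.2.natDegree = n ∧
    resultantAC p.1 p.2 = 1}

/-!
For monic `φ` of degree `n` over `F = F_q`, `Res(φ, ψ)` is the norm to `F` of the class of `ψ` in
`F[X]/(φ)`, and every class contains exactly one monic `ψ` of degree `n`. So the fibre of `Res_n(F)`
over `φ` is the kernel of the norm `N_φ : (F[X]/(φ))ˣ → Fˣ`, and its cardinality times `q - 1` is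
`|(F[X]/(φ))ˣ|` times the index of the image of `N_φ`.

The norm of a class modulo `pᵉ` is the `e`-th power of its norm modulo `p`, and for `p` irreducible
the norm modulo `p` is surjective; so for `d ∣ q - 1` the image of `N_φ` consists of `d`-th powers
exactly when `φ` is itself a `d`-th power. As `Fˣ` is cyclic, the sum of the totients of those
`d` is the index, because the totients of the divisors of an integer add up to that integer. It
remains to sum `|(F[X]/(θᵈ))ˣ|` over monic `θ`, that is, to count coprime pairs of monic
polynomials, and this follows by splitting off the gcd from an arbitrary pair.
-/

/-! ### The resultant as a norm -/

theorem det_add_scalar_eq_prod_roots_charpoly {K ι : Type*} [Field K] [Fintype ι] [DecidableEq ι]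
    {M : Matrix ι ι K} (hM : M.charpoly.Splits) (a : K) :
    (M + Matrix.scalar ι a).det = (M.charpoly.roots.map (· + a)).prod := by
  calc (M + Matrix.scalar ι a).det = (-(Matrix.scalar ι (-a) - M)).det := by
        rw [map_neg, neg_sub, sub_neg_eq_add]
    _ = (-1) ^ M.charpoly.roots.card * M.charpoly.eval (-a) := by
        rw [Matrix.det_neg, Matrix.eval_charpoly, ← hM.natDegree_eq_card_roots,
          M.charpoly_natDegree_eq_dim]
    _ = (M.charpoly.roots.map fun α => -1 * (-a - α)).prod := by
        rw [hM.eval_eq_prod_roots_of_monic M.charpoly_monic, Multiset.prod_map_mul,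
          Multiset.map_const', Multiset.prod_replicate]
    _ = (M.charpoly.roots.map (· + a)).prod := by
        congr! 2 with α
        ring

theorem det_aeval_eq_prod_roots_charpoly {K ι : Type*} [Field K] [Fintype ι] [DecidableEq ι]
    {M : Matrix ι ι K} (hM : M.charpoly.Splits) {f : K[X]} (hf : f.Splits) :
    (aeval M f).det = (M.charpoly.roots.map fun α => f.eval α).prod := by
  have hcard : M.charpoly.roots.card = Fintype.card ι := by
    rw [← hM.natDegree_eq_card_roots, M.charpoly_natDegree_eq_dim]
  induction hf using Submonoid.closure_induction with
  | mem g hg =>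
    rcases hg with ⟨a, rfl⟩ | ⟨a, rfl⟩
    · simp [Algebra.algebraMap_eq_smul_one, hcard]
    · simpa [Matrix.algebraMap_eq_diagonal, Pi.algebraMap_def] using
        det_add_scalar_eq_prod_roots_charpoly hM a
  | one => simp
  | mul g h _ _ hg hh => simp [hg, hh, Multiset.prod_map_mul]

theorem isUnit_norm_iff {R S : Type*} [CommRing R] [CommRing S] [Algebra R S] [Module.Free R S]
    [Module.Finite R S] {x : S} : IsUnit (Algebra.norm R x) ↔ IsUnit x := by
  rw [Algebra.norm_apply, ← LinearMap.isUnit_iff_isUnit_det, Algebra.lmul_isUnit_iff]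

section NormAdjoinRoot

variable {F : Type*} [Field F]

theorem algebraMap_norm_adjoinRoot_mk {φ : F[X]} (hφ : φ.Monic) (f : F[X]) :
    algebraMap F (AlgebraicClosure F) (Algebra.norm F (AdjoinRoot.mk φ f)) = resultantAC φ f := by
  set ι := algebraMap F (AlgebraicClosure F)
  let pb := AdjoinRoot.powerBasis hφ.ne_zero
  set M := Algebra.leftMulMatrix pb.basis pb.gen
  have hM : M.charpoly = φ := by
    rw [charpoly_leftMulMatrix, AdjoinRoot.minpoly_powerBasis_gen_of_monic hφ]
  calc ι (Algebra.norm F (AdjoinRoot.mk φ f)) = ι (aeval M f).det := by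
        rw [Algebra.norm_eq_matrix_det pb.basis, ← AdjoinRoot.aeval_eq, aeval_algHom_apply,
          AdjoinRoot.powerBasis_gen]
    _ = (aeval (ι.mapMatrix M) (f.map ι)).det := by
        rw [RingHom.map_det, map_aeval_eq_aeval_map (φ := ι)]
        ext
        simp [Matrix.algebraMap_matrix_apply, apply_ite ι]
    _ = resultantAC φ f := by
        rw [det_aeval_eq_prod_roots_charpoly (IsAlgClosed.splits _) (IsAlgClosed.splits _),
          RingHom.mapMatrix_apply, M.charpoly_map ι, hM, resultantAC]

theorem resultantAC_mul_left {φ₁ φ₂ : F[X]} (h₁ : φ₁ ≠ 0) (h₂ : φ₂ ≠ 0) (f : F[X]) :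
    resultantAC (φ₁ * φ₂) f = resultantAC φ₁ f * resultantAC φ₂ f := by
  simp only [resultantAC, Polynomial.map_mul]
  rw [roots_mul (mul_ne_zero (Polynomial.map_ne_zero h₁) (Polynomial.map_ne_zero h₂)),
    Multiset.map_add, Multiset.prod_add]

theorem norm_adjoinRoot_mk_mul {φ₁ φ₂ : F[X]} (h₁ : φ₁.Monic) (h₂ : φ₂.Monic) (f : F[X]) :
    Algebra.norm F (AdjoinRoot.mk (φ₁ * φ₂) f) =
      Algebra.norm F (AdjoinRoot.mk φ₁ f) * Algebra.norm F (AdjoinRoot.mk φ₂ f) := by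
  apply (algebraMap F (AlgebraicClosure F)).injective
  rw [map_mul, algebraMap_norm_adjoinRoot_mk (h₁.mul h₂), algebraMap_norm_adjoinRoot_mk h₁,
    algebraMap_norm_adjoinRoot_mk h₂, resultantAC_mul_left h₁.ne_zero h₂.ne_zero]

theorem norm_adjoinRoot_mk_pow {φ : F[X]} (hφ : φ.Monic) (d : ℕ) (f : F[X]) :
    Algebra.norm F (AdjoinRoot.mk (φ ^ d) f) = Algebra.norm F (AdjoinRoot.mk φ f) ^ d := by
  apply (algebraMap F (AlgebraicClosure F)).injective
  rw [map_pow, algebraMap_norm_adjoinRoot_mk (hφ.pow d), algebraMap_norm_adjoinRoot_mk hφ,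
    resultantAC, Polynomial.map_pow, roots_pow, Multiset.map_nsmul, Multiset.prod_nsmul,
    resultantAC]

end NormAdjoinRoot

/-! ### Monic polynomials of fixed degree -/

/-- A monic polynomial of degree `n` is determined by its `n` lower coefficients, which are
arbitrary. -/
noncomputable def monicDegreeEqEquivFun (R : Type*) [CommRing R] [Nontrivial R] (n : ℕ) :
    MonicDegreeEq R n ≃ (Fin n → R) :=
  (Equiv.subtypeEquivRight fun p => by
    refine ⟨fun h => ⟨MonicDegreeEq.monic ⟨p, h⟩, MonicDegreeEq.natDegree ⟨p, h⟩⟩, ?_⟩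
    rintro ⟨hp, hn⟩
    exact (MonicDegreeEq.mk p hp hn).2).trans <|
  (monicEquivDegreeLT n).trans (degreeLTEquiv R n).toEquiv

theorem card_monicDegreeEq (R : Type*) [CommRing R] [Nontrivial R] (n : ℕ) :
    Nat.card (MonicDegreeEq R n) = Nat.card R ^ n := by
  rw [Nat.card_congr (monicDegreeEqEquivFun R n), Nat.card_fun, Nat.card_fin]

noncomputable instance fintypeMonicDegreeEq {R : Type*} [CommRing R] [Nontrivial R] [Finite R]
    (n : ℕ) : Fintype (MonicDegreeEq R n) :=
  have := Finite.of_equiv _ (monicDegreeEqEquivFun R n).symm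
  .ofFinite _

theorem isUnit_adjoinRoot_mk_iff {R : Type*} [CommRing R] {θ ψ : R[X]} :
    IsUnit (AdjoinRoot.mk θ ψ) ↔ IsCoprime θ ψ := by
  constructor
  · intro h
    obtain ⟨y, hy⟩ := h.exists_left_inv
    obtain ⟨g, rfl⟩ := AdjoinRoot.mk_surjective y
    rw [← map_mul, ← map_one (AdjoinRoot.mk θ), AdjoinRoot.mk_eq_mk] at hy
    obtain ⟨u, hu⟩ := hy
    exact ⟨-u, g, by linear_combination hu⟩
  · rintro ⟨u, v, h⟩
    refine .of_mul_eq_one_right (AdjoinRoot.mk θ v) ?_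
    rw [← map_mul, ← map_one (AdjoinRoot.mk θ), AdjoinRoot.mk_eq_mk]
    exact ⟨-u, by linear_combination h⟩

section DivisionByMonic

variable {R : Type*} [CommRing R] [Nontrivial R]

/-- The product of two monic polynomials, with the resulting degree as a parameter. -/
noncomputable def monicDegreeEqMul {k m n : ℕ} (h : k + m = n) (φ : MonicDegreeEq R k)
    (ψ : MonicDegreeEq R m) : MonicDegreeEq R n :=
  .mk (φ.1 * ψ.1) (φ.monic.mul ψ.monic) (by
    rw [φ.monic.natDegree_mul ψ.monic, φ.natDegree, ψ.natDegree, h])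

theorem degree_modByMonicHom_lt {θ : R[X]} (hθ : θ.Monic) (x : AdjoinRoot θ) :
    (AdjoinRoot.modByMonicHom hθ x).degree < θ.degree := by
  obtain ⟨f, rfl⟩ := AdjoinRoot.mk_surjective x
  exact AdjoinRoot.modByMonicHom_mk hθ f ▸ degree_modByMonic_lt f hθ

/-- Division with remainder by a monic `θ` on monic polynomials `ψ` of degree at least that of `θ`:
the remainder is recorded as the class of `ψ` in `AdjoinRoot θ`, next to the monic quotient. -/
noncomputable def monicDegreeEqEquivProdAdjoinRoot {k m n : ℕ} (h : k + m = n)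
    (θ : MonicDegreeEq R k) :
    MonicDegreeEq R n ≃ AdjoinRoot θ.1 × MonicDegreeEq R m where
  toFun ψ :=
    have hle : θ.1.degree ≤ ψ.1.degree := by
      rw [θ.degree, ψ.degree]
      exact_mod_cast h ▸ Nat.le_add_right k m
    (AdjoinRoot.mk θ.1 ψ.1,
      .mk (ψ.1 /ₘ θ.1) ((leadingCoeff_divByMonic_of_monic θ.monic hle).trans ψ.monic) (by
        rw [natDegree_divByMonic _ θ.monic, ψ.natDegree, θ.natDegree, ← h,
          Nat.add_sub_cancel_left]))
  invFun x :=
    have hlt : (AdjoinRoot.modByMonicHom θ.monic x.1).degree <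
        (monicDegreeEqMul h θ x.2).1.degree := by
      refine (degree_modByMonicHom_lt θ.monic x.1).trans_le ?_
      rw [θ.degree, (monicDegreeEqMul h θ x.2).degree]
      exact_mod_cast h ▸ Nat.le_add_right k m
    .mk ((monicDegreeEqMul h θ x.2).1 + AdjoinRoot.modByMonicHom θ.monic x.1)
      ((monicDegreeEqMul h θ x.2).monic.add_of_left hlt)
      ((natDegree_add_eq_left_of_degree_lt hlt).trans (monicDegreeEqMul h θ x.2).natDegree)
  left_inv ψ := by
    ext1
    change θ.1 * (ψ.1 /ₘ θ.1) + AdjoinRoot.modByMonicHom θ.monic (AdjoinRoot.mk θ.1 ψ.1) = ψ.1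
    rw [AdjoinRoot.modByMonicHom_mk, add_comm, modByMonic_add_div]
  right_inv x := by
    obtain ⟨y, g⟩ := x
    set r := AdjoinRoot.modByMonicHom θ.monic y
    have hdiv : (θ.1 * g.1 + r) /ₘ θ.1 = g.1 :=
      (div_modByMonic_unique g.1 r θ.monic
        ⟨add_comm _ _, degree_modByMonicHom_lt θ.monic y⟩).1
    have hmk : AdjoinRoot.mk θ.1 (θ.1 * g.1 + r) = y := by
      rw [map_add, map_mul, AdjoinRoot.mk_self, zero_mul, zero_add,
        AdjoinRoot.mk_leftInverse θ.monic]
    exact Prod.ext hmk (Subtype.ext hdiv)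

theorem card_monicDegreeEq_adjoinRoot_mk {k m n : ℕ} (h : k + m = n) (θ : MonicDegreeEq R k)
    (P : AdjoinRoot θ.1 → Prop) :
    Nat.card {ψ : MonicDegreeEq R n // P (AdjoinRoot.mk θ.1 ψ.1)} =
      Nat.card {x // P x} * Nat.card R ^ m := by
  rw [← card_monicDegreeEq R m, ← Nat.card_prod]
  exact Nat.card_congr <|
    ((monicDegreeEqEquivProdAdjoinRoot h θ).subtypeEquiv fun _ => Iff.rfl).trans
      Equiv.prodSubtypeFstEquivSubtypeProd

theorem card_isCoprime_monicDegreeEq {k m n : ℕ} (h : k + m = n) (θ : MonicDegreeEq R k) :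
    Nat.card {ψ : MonicDegreeEq R n // IsCoprime θ.1 ψ.1} =
      Nat.card (AdjoinRoot θ.1)ˣ * Nat.card R ^ m := by
  simp_rw [← isUnit_adjoinRoot_mk_iff]
  rw [card_monicDegreeEq_adjoinRoot_mk h θ IsUnit,
    Nat.card_congr Submonoid.unitsTypeEquivIsUnitSubmonoid.toEquiv]
  rfl

theorem card_units_adjoinRoot_pow {k m d : ℕ} (hd : d ≠ 0) (h : k + m = d * k)
    (θ : MonicDegreeEq R k) :
    Nat.card (AdjoinRoot (θ.1 ^ d))ˣ = Nat.card (AdjoinRoot θ.1)ˣ * Nat.card R ^ m := by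
  let φ : MonicDegreeEq R (d * k) := .mk (θ.1 ^ d) (θ.monic.pow d)
    (by rw [θ.monic.natDegree_pow, θ.natDegree])
  have hcop (ψ : R[X]) : IsCoprime φ.1 ψ ↔ IsCoprime θ.1 ψ :=
    IsCoprime.pow_left_iff (Nat.pos_of_ne_zero hd)
  have hcard := card_isCoprime_monicDegreeEq (add_zero (d * k)) φ
  rw [pow_zero, mul_one] at hcard
  simp_rw [hcop, card_isCoprime_monicDegreeEq h θ] at hcard
  exact hcard.symm

end DivisionByMonic

/-! ### Coprime pairs of monic polynomials -/

theorem dvd_of_mul_eq_mul_of_isCoprime {R : Type*} [CommRing R] {d d' a b a' b' : R}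
    (h : IsCoprime a b) (ha : d * a = d' * a') (hb : d * b = d' * b') : d' ∣ d := by
  obtain ⟨u, v, huv⟩ := h
  exact ⟨u * a' + v * b', by linear_combination -d * huv + u * ha + v * hb⟩

section CoprimeMonicPairs

open Finset.HasAntidiagonal (antidiagonal mem_antidiagonal)

variable {F : Type*} [Field F]

theorem exists_monic_mul_isCoprime {φ ψ : F[X]} (hφ : φ.Monic) (hψ : ψ.Monic) :
    ∃ d a b : F[X], d.Monic ∧ a.Monic ∧ b.Monic ∧ IsCoprime a b ∧ d * a = φ ∧ d * b = ψ := by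
  classical
  obtain ⟨a, b, ha, hb, hab⟩ := extract_gcd φ ψ
  have hd : (gcd φ ψ).Monic := by
    rw [← normalize_gcd φ ψ]
    exact monic_normalize (gcd_ne_zero_of_left hφ.ne_zero)
  exact ⟨gcd φ ψ, a, b, hd, hd.of_mul_monic_left (ha ▸ hφ), hd.of_mul_monic_left (hb ▸ hψ),
    (gcd_isUnit_iff a b).1 hab, ha.symm, hb.symm⟩

variable (F) in
/-- Pairs of coprime monic polynomials of degree `n`. -/
abbrev CoprimeMonicPairs (n : ℕ) : Type _ :=
  {p : MonicDegreeEq F n × MonicDegreeEq F n // IsCoprime p.1.1 p.2.1}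

/-- Multiplication of both entries of a coprime pair of degree `j` by a common monic factor of
degree `i`, for all `i + j = n`. -/
noncomputable def mulCoprimeMonicPairs (n : ℕ) :
    (Σ i : antidiagonal n, MonicDegreeEq F i.1.1 × CoprimeMonicPairs F i.1.2) →
      MonicDegreeEq F n × MonicDegreeEq F n :=
  fun ⟨i, d, p⟩ =>
    have h := mem_antidiagonal.1 i.2
    (monicDegreeEqMul h d p.1.1, monicDegreeEqMul h d p.1.2)

theorem mulCoprimeMonicPairs_injective (n : ℕ) :
    Function.Injective (mulCoprimeMonicPairs (F := F) n) := by
  rintro ⟨⟨⟨k, j⟩, hi⟩, d, ⟨a, b⟩, hab⟩ ⟨⟨⟨k', j'⟩, hi'⟩, d', ⟨a', b'⟩, hab'⟩ h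
  obtain ⟨ha, hb⟩ := Prod.ext_iff.1 h
  replace ha : d.1 * a.1 = d'.1 * a'.1 := congr_arg Subtype.val ha
  replace hb : d.1 * b.1 = d'.1 * b'.1 := congr_arg Subtype.val hb
  have hd : d.1 = d'.1 := eq_of_monic_of_associated d.monic d'.monic <|
    associated_of_dvd_dvd (dvd_of_mul_eq_mul_of_isCoprime hab' ha.symm hb.symm)
      (dvd_of_mul_eq_mul_of_isCoprime hab ha hb)
  obtain rfl : k = k' :=
    d.natDegree.symm.trans ((congr_arg Polynomial.natDegree hd).trans d'.natDegree)
  obtain rfl : j = j' := by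
    simp only [mem_antidiagonal] at hi hi'
    omega
  obtain rfl : d = d' := Subtype.ext hd
  obtain rfl : a = a' := Subtype.ext (mul_left_cancel₀ d.monic.ne_zero ha)
  obtain rfl : b = b' := Subtype.ext (mul_left_cancel₀ d.monic.ne_zero hb)
  rfl

theorem mulCoprimeMonicPairs_surjective (n : ℕ) :
    Function.Surjective (mulCoprimeMonicPairs (F := F) n) := by
  rintro ⟨φ, ψ⟩
  obtain ⟨d, a, b, hd, ha, hb, hab, hφ, hψ⟩ := exists_monic_mul_isCoprime φ.monic ψ.monic
  have hdeg : d.natDegree + a.natDegree = n := by rw [← hd.natDegree_mul ha, hφ, φ.natDegree]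
  have hdeg' : d.natDegree + b.natDegree = n := by rw [← hd.natDegree_mul hb, hψ, ψ.natDegree]
  have hba : b.natDegree = a.natDegree := by omega
  exact ⟨⟨⟨(d.natDegree, a.natDegree), mem_antidiagonal.2 hdeg⟩, .mk d hd rfl,
    ⟨(.mk a ha rfl, .mk b hb hba), hab⟩⟩, Prod.ext (Subtype.ext hφ) (Subtype.ext hψ)⟩

variable (F) [Finite F]

theorem sum_card_coprimeMonicPairs (n : ℕ) :
    ∑ i ∈ antidiagonal n, Nat.card F ^ i.1 * Nat.card (CoprimeMonicPairs F i.2) =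
      Nat.card F ^ (2 * n) := by
  rw [two_mul, pow_add, ← card_monicDegreeEq F n, ← Nat.card_prod,
    ← Nat.card_congr (.ofBijective _ ⟨mulCoprimeMonicPairs_injective n,
      mulCoprimeMonicPairs_surjective n⟩), Nat.card_sigma, ← Finset.sum_coe_sort]
  simp_rw [Nat.card_prod, card_monicDegreeEq]

theorem card_coprimeMonicPairs {n : ℕ} (hn : n ≠ 0) :
    Nat.card (CoprimeMonicPairs F n) = (Nat.card F - 1) * Nat.card F ^ (2 * n - 1) := by
  obtain ⟨m, rfl⟩ := Nat.exists_eq_succ_of_ne_zero hn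
  have hrec : Nat.card (CoprimeMonicPairs F (m + 1)) + Nat.card F ^ (2 * m + 1) =
      Nat.card F ^ (2 * m + 1 + 1) := by
    rw [add_assoc, ← mul_add_one 2 m, ← sum_card_coprimeMonicPairs F (m + 1),
      Finset.Nat.sum_antidiagonal_succ, pow_zero, one_mul, pow_succ',
      ← sum_card_coprimeMonicPairs F m, Finset.mul_sum]
    simp_rw [pow_succ', mul_assoc]
  calc Nat.card (CoprimeMonicPairs F (m + 1))
      = Nat.card F ^ (2 * m + 1 + 1) - Nat.card F ^ (2 * m + 1) := Nat.eq_sub_of_add_eq hrec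
    _ = (Nat.card F - 1) * Nat.card F ^ (2 * m + 1) := by rw [Nat.sub_mul, one_mul, ← pow_succ']

theorem sum_card_units_adjoinRoot {n : ℕ} (hn : n ≠ 0) :
    ∑ θ : MonicDegreeEq F n, Nat.card (AdjoinRoot θ.1)ˣ =
      (Nat.card F - 1) * Nat.card F ^ (2 * n - 1) := by
  rw [← card_coprimeMonicPairs F hn, Nat.card_congr
    (Equiv.subtypeProdEquivSigmaSubtype fun φ ψ : MonicDegreeEq F n => IsCoprime φ.1 ψ.1),
    Nat.card_sigma]
  refine Finset.sum_congr rfl fun θ _ => ?_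
  rw [card_isCoprime_monicDegreeEq (add_zero n) θ, pow_zero, mul_one]

end CoprimeMonicPairs

/-! ### The index of the image of the norm -/

theorem le_range_powMonoidHom_iff_dvd_index {G : Type*} [CommGroup G] [IsCyclic G] [Finite G]
    (H : Subgroup G) {d : ℕ} (hd : d ∣ Nat.card G) :
    H ≤ (powMonoidHom d).range ↔ d ∣ H.index := by
  constructor
  · intro h
    simpa only [IsCyclic.index_powMonoidHom_range, Nat.gcd_eq_right hd] using
      Subgroup.index_dvd_of_le h
  · rintro ⟨e, he⟩
    have hle : (powMonoidHom H.index : G →* G).range ≤ H := by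
      rintro _ ⟨x, rfl⟩
      exact H.pow_index_mem x
    have hindex : (powMonoidHom H.index : G →* G).range.index = H.index := by
      rw [IsCyclic.index_powMonoidHom_range, Nat.gcd_eq_right H.index_dvd_card]
    have hH : H ≤ (powMonoidHom H.index : G →* G).range := by
      rw [← Subgroup.relIndex_eq_one]
      refine Nat.eq_of_mul_eq_mul_right (Nat.pos_of_ne_zero H.index_ne_zero_of_finite) ?_
      rw [Subgroup.relIndex_mul_index hle, hindex, one_mul]
    refine hH.trans ?_
    rintro _ ⟨x, rfl⟩
    exact ⟨x ^ e, by simp only [powMonoidHom_apply, he, ← pow_mul, mul_comm]⟩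

open scoped Classical in
theorem index_eq_sum_totient {G : Type*} [CommGroup G] [IsCyclic G] [Finite G] (H : Subgroup G) :
    H.index = ∑ d ∈ (Nat.card G).divisors with H ≤ (powMonoidHom d).range, d.totient := by
  have hdiv : {d ∈ (Nat.card G).divisors | H ≤ (powMonoidHom d).range} = H.index.divisors := by
    rw [← Nat.divisors_filter_dvd_of_dvd Nat.card_pos.ne' H.index_dvd_card]
    exact Finset.filter_congr fun d hd =>
      le_range_powMonoidHom_iff_dvd_index H (Nat.dvd_of_mem_divisors hd)
  rw [hdiv, Nat.sum_totient]

/-- The norm homomorphism `N_φ` from the units of `R[X]/(φ)` to those of `R`. -/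
noncomputable def unitsNorm {R : Type*} [CommRing R] (φ : R[X]) : (AdjoinRoot φ)ˣ →* Rˣ :=
  Units.map (Algebra.norm R)

theorem mem_range_unitsNorm {R : Type*} [CommRing R] {φ : R[X]} (hφ : φ.Monic) {c : Rˣ} :
    c ∈ (unitsNorm φ).range ↔ ∃ f : R[X], Algebra.norm R (AdjoinRoot.mk φ f) = c := by
  have := hφ.free_adjoinRoot
  have := hφ.finite_adjoinRoot
  constructor
  · rintro ⟨x, rfl⟩
    obtain ⟨f, hf⟩ := AdjoinRoot.mk_surjective x.1
    exact ⟨f, congr_arg _ hf⟩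
  · rintro ⟨f, hf⟩
    obtain ⟨x, hx⟩ := isUnit_norm_iff.1 (hf ▸ c.isUnit)
    exact ⟨x, Units.ext ((congr_arg _ hx).trans hf)⟩

section IndexRange

variable {F : Type*} [Field F]

/-- `φ` is the `d`-th power of a monic polynomial. -/
def IsMonicPow (d : ℕ) (φ : F[X]) : Prop :=
  ∃ θ : F[X], θ.Monic ∧ θ ^ d = φ

theorem IsMonicPow.dvd_natDegree {d : ℕ} {φ : F[X]} (h : IsMonicPow d φ) : d ∣ φ.natDegree := by
  obtain ⟨θ, hθ, rfl⟩ := h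
  exact ⟨θ.natDegree, hθ.natDegree_pow d⟩

theorem isMonicPow_of_forall_dvd_multiplicity {φ : F[X]} (hφ : φ.Monic) {d : ℕ} (hd : d ≠ 0)
    (h : ∀ p : F[X], p.Monic → Irreducible p → d ∣ multiplicity p φ) : IsMonicPow d φ := by
  classical
  open UniqueFactorizationMonoid in
  have hcount (p : F[X]) (hp : p ∈ normalizedFactors φ) : d ∣ (normalizedFactors φ).count p := by
    have hirr := irreducible_of_normalized_factor p hp
    have hnorm := normalize_normalized_factor p hp
    have hmul := multiplicity_eq_count_normalizedFactors hirr hφ.ne_zero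
    rw [hnorm] at hmul
    exact hmul ▸ h p (hnorm ▸ monic_normalize hirr.ne_zero) hirr
  obtain ⟨s, hs⟩ := Multiset.exists_smul_of_dvd_count _ hcount
  have hprod : s.prod ^ d = φ := by
    rw [← Multiset.prod_nsmul, ← hs, UniqueFactorizationMonoid.prod_normalizedFactors_eq hφ.ne_zero,
      hφ.normalize_eq_self]
  have hne : s.prod ≠ 0 := fun h0 => hφ.ne_zero (by rw [← hprod, h0, zero_pow hd])
  have hmonic : (normalize s.prod).Monic := monic_normalize hne
  exact ⟨normalize s.prod, hmonic, eq_of_monic_of_associated (hmonic.pow d) hφ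
    (hprod ▸ (normalize_associated s.prod).pow_pow)⟩

theorem pow_injOn_monic {d : ℕ} (hd : d ≠ 0) : Set.InjOn (· ^ d) {θ : F[X] | θ.Monic} :=
  fun _ hθ _ hθ' h =>
    eq_of_monic_of_associated hθ hθ' <| associated_of_dvd_dvd
      ((UniqueFactorizationMonoid.pow_dvd_pow_iff_dvd hd).1 h.dvd)
      ((UniqueFactorizationMonoid.pow_dvd_pow_iff_dvd hd).1 h.symm.dvd)

theorem norm_adjoinRoot_surjective [Finite F] {p : F[X]} (hp : Irreducible p) :
    Function.Surjective (Algebra.norm F : AdjoinRoot p → F) := by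
  have : Fact (Irreducible p) := ⟨hp⟩
  have := (AdjoinRoot.powerBasis hp.ne_zero).finite
  have := Module.finite_of_finite F (M := AdjoinRoot p)
  exact FiniteField.norm_surjective F (AdjoinRoot p)

theorem range_powMonoidHom_le_range_unitsNorm [Finite F] {p g : F[X]} (hp : p.Monic) (hg : g.Monic)
    (hirr : Irreducible p) (hpg : ¬ p ∣ g) (e : ℕ) :
    (powMonoidHom e).range ≤ (unitsNorm (p ^ e * g)).range := by
  rintro _ ⟨c, rfl⟩
  obtain ⟨x, hx⟩ := norm_adjoinRoot_surjective hirr (c : F)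
  obtain ⟨f, rfl⟩ := AdjoinRoot.mk_surjective x
  obtain ⟨u, v, huv⟩ := hirr.coprime_iff_not_dvd.2 hpg
  -- The Chinese remainder theorem lets us change `f` modulo `g` to `1`.
  have hmodp : AdjoinRoot.mk p (f * (v * g) + u * p) = AdjoinRoot.mk p f :=
    AdjoinRoot.mk_eq_mk.2 ⟨u * (1 - f), by linear_combination f * huv⟩
  have hmodg : AdjoinRoot.mk g (f * (v * g) + u * p) = 1 :=
    (AdjoinRoot.mk_eq_mk (h := 1)).2 ⟨v * (f - 1), by linear_combination huv⟩
  refine (mem_range_unitsNorm ((hp.pow e).mul hg)).2 ⟨f * (v * g) + u * p, ?_⟩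
  rw [norm_adjoinRoot_mk_mul (hp.pow e) hg, norm_adjoinRoot_mk_pow hp, hmodp, hmodg, hx, map_one,
    mul_one, powMonoidHom_apply, Units.val_pow_eq_pow_val]

theorem dvd_multiplicity_of_range_unitsNorm_le [Finite F] {φ p : F[X]} (hφ : φ.Monic)
    (hp : p.Monic) (hirr : Irreducible p) {d : ℕ} (hd : d ∣ Nat.card Fˣ)
    (h : (unitsNorm φ).range ≤ (powMonoidHom d).range) : d ∣ multiplicity p φ := by
  obtain ⟨g, hg, hpg⟩ :=
    (FiniteMultiplicity.of_not_isUnit hirr.not_isUnit hφ.ne_zero).exists_eq_pow_mul_and_not_dvd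
  generalize multiplicity p φ = e at hg ⊢
  subst hg
  have hle := (range_powMonoidHom_le_range_unitsNorm hp ((hp.pow e).of_mul_monic_left hφ) hirr hpg
    e).trans h
  rw [le_range_powMonoidHom_iff_dvd_index _ hd, IsCyclic.index_powMonoidHom_range] at hle
  exact hle.trans (Nat.gcd_dvd_right _ _)

theorem range_unitsNorm_le_range_powMonoidHom_iff [Finite F] {φ : F[X]} (hφ : φ.Monic)
    {d : ℕ} (hd : d ∣ Nat.card Fˣ) :
    (unitsNorm φ).range ≤ (powMonoidHom d).range ↔ IsMonicPow d φ := by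
  have hd0 : d ≠ 0 := ne_zero_of_dvd_ne_zero Nat.card_pos.ne' hd
  constructor
  · intro h
    exact isMonicPow_of_forall_dvd_multiplicity hφ hd0 fun p hp hirr =>
      dvd_multiplicity_of_range_unitsNorm_le hφ hp hirr hd h
  · rintro ⟨θ, hθ, rfl⟩ c hc
    obtain ⟨f, hf⟩ := (mem_range_unitsNorm hφ).1 hc
    rw [norm_adjoinRoot_mk_pow hθ] at hf
    obtain ⟨a, ha⟩ := (isUnit_pow_iff hd0).1 (hf ▸ c.isUnit)
    exact ⟨a, Units.ext (by rw [← hf, ← ha]; rfl)⟩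

open scoped Classical in
theorem index_range_unitsNorm [Finite F] {φ : F[X]} (hφ : φ.Monic) :
    (unitsNorm φ).range.index =
      ∑ d ∈ (Nat.card Fˣ).divisors with IsMonicPow d φ, d.totient := by
  rw [index_eq_sum_totient]
  exact Finset.sum_congr (Finset.filter_congr fun d hd =>
    range_unitsNorm_le_range_powMonoidHom_iff hφ (Nat.dvd_of_mem_divisors hd)) fun _ _ => rfl

end IndexRange

/-! ### Counting `Res_n(F)` -/

theorem card_mul_card_ker {G H : Type*} [Group G] [Group H] (f : G →* H) :
    Nat.card H * Nat.card f.ker = Nat.card G * f.range.index := by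
  rw [← f.range.card_mul_index, ← f.ker.card_mul_index, Subgroup.index_ker]
  ring

theorem card_resultantAC_eq_one {F : Type*} [Field F] {n : ℕ} (φ : MonicDegreeEq F n) :
    Nat.card {ψ : MonicDegreeEq F n // resultantAC φ.1 ψ.1 = 1} =
      Nat.card (unitsNorm φ.1).ker := by
  have := φ.monic.free_adjoinRoot
  have := φ.monic.finite_adjoinRoot
  simp_rw [← algebraMap_norm_adjoinRoot_mk φ.monic, FaithfulSMul.algebraMap_eq_one_iff]
  rw [card_monicDegreeEq_adjoinRoot_mk (add_zero n) φ fun x => Algebra.norm F x = 1, pow_zero,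
    mul_one]
  have hunit (x : AdjoinRoot φ.1) (hx : Algebra.norm F x = 1) : IsUnit x :=
    isUnit_norm_iff.1 (hx ▸ isUnit_one)
  exact Nat.card_congr
    { toFun := fun x => ⟨(hunit x.1 x.2).unit, Units.ext x.2⟩
      invFun := fun u => ⟨u.1, congr_arg Units.val u.2⟩
      left_inv := fun _ => rfl
      right_inv := fun _ => Subtype.ext (Units.ext rfl) }

/-- Decomposition of `Res_n(F)` into its fibres over the first entry. -/
noncomputable def resPairsEquivSigma (F : Type*) [Field F] (n : ℕ) :
    ResPairs F n ≃
      Σ φ : MonicDegreeEq F n, {ψ : MonicDegreeEq F n // resultantAC φ.1 ψ.1 = 1} where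
  toFun p := ⟨.mk p.1.1 p.2.1 p.2.2.1, .mk p.1.2 p.2.2.2.1 p.2.2.2.2.1, p.2.2.2.2.2⟩
  invFun x := ⟨(x.1.1, x.2.1.1), x.1.monic, x.1.natDegree, x.2.1.monic, x.2.1.natDegree, x.2.2⟩
  left_inv _ := rfl
  right_inv _ := rfl

theorem card_units_mul_card_resPairs (F : Type*) [Field F] [Finite F] (n : ℕ) :
    Nat.card Fˣ * Nat.card (ResPairs F n) =
      ∑ φ : MonicDegreeEq F n, Nat.card (AdjoinRoot φ.1)ˣ * (unitsNorm φ.1).range.index := by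
  rw [Nat.card_congr (resPairsEquivSigma F n), Nat.card_sigma, Finset.mul_sum]
  simp_rw [card_resultantAC_eq_one, card_mul_card_ker]

open scoped Classical in
theorem sum_card_units_adjoinRoot_isMonicPow (F : Type*) [Field F] [Finite F] {d k n : ℕ}
    (hn : n ≠ 0) (hdk : d * k = n) :
    ∑ φ : MonicDegreeEq F n with IsMonicPow d φ.1, Nat.card (AdjoinRoot φ.1)ˣ =
      Nat.card Fˣ * Nat.card F ^ (n + k - 1) := by
  obtain ⟨hd, hk⟩ := mul_ne_zero_iff.1 (hdk ▸ hn)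
  obtain ⟨m, hm⟩ := Nat.exists_eq_add_of_le (Nat.le_mul_of_pos_left k (Nat.pos_of_ne_zero hd))
  let pow (θ : MonicDegreeEq F k) : MonicDegreeEq F n :=
    .mk (θ.1 ^ d) (θ.monic.pow d) (by rw [θ.monic.natDegree_pow, θ.natDegree, hdk])
  calc _ = ∑ θ : MonicDegreeEq F k, Nat.card (AdjoinRoot (θ.1 ^ d))ˣ := by
        symm
        refine Finset.sum_nbij pow (fun θ _ => ?_) (fun θ _ θ' _ h => ?_) (fun φ hφ => ?_)
          fun _ _ => rfl
        · exact Finset.mem_filter.2 ⟨Finset.mem_univ _, θ.1, θ.monic, rfl⟩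
        · exact Subtype.ext (pow_injOn_monic hd θ.monic θ'.monic (congr_arg Subtype.val h))
        · obtain ⟨θ, hθ, hθφ⟩ := (Finset.mem_filter.1 hφ).2
          have hdeg : θ.natDegree = k := by
            rw [← Nat.mul_right_inj hd, ← hθ.natDegree_pow, hθφ, φ.natDegree, hdk]
          exact ⟨.mk θ hθ hdeg, Finset.mem_univ _, Subtype.ext hθφ⟩
    _ = Nat.card Fˣ * Nat.card F ^ (n + k - 1) := by
        simp_rw [card_units_adjoinRoot_pow hd hm.symm]
        rw [← Finset.sum_mul, sum_card_units_adjoinRoot F hk, Nat.card_units, mul_assoc, ← pow_add]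
        congr 2
        omega

open scoped Classical in
theorem card_units_mul_card_resPairs_eq_sum_divisors (F : Type*) [Field F] [Finite F] (n : ℕ) :
    Nat.card Fˣ * Nat.card (ResPairs F n) =
      ∑ d ∈ (Nat.card Fˣ).divisors, d.totient *
        ∑ φ : MonicDegreeEq F n with IsMonicPow d φ.1, Nat.card (AdjoinRoot φ.1)ˣ := by
  simp_rw [card_units_mul_card_resPairs, index_range_unitsNorm (MonicDegreeEq.monic _),
    Finset.mul_sum, mul_comm (Nat.card (AdjoinRoot _)ˣ)]
  exact Finset.sum_comm' fun φ d => by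
    simp only [Finset.mem_univ, Finset.mem_filter, true_and, and_comm]

theorem stmt_5_general (F : Type*) [Field F] [Finite F] {n : ℕ} (hn : n ≠ 0) :
    Nat.card (ResPairs F n) =
      ∑ d ∈ (n.gcd (Nat.card F - 1)).divisors, d.totient * Nat.card F ^ (n + n / d - 1) := by
  classical
  have hsub : (n.gcd (Nat.card F - 1)).divisors ⊆ (Nat.card Fˣ).divisors :=
    Nat.divisors_subset_of_dvd Nat.card_pos.ne' (Nat.card_units F ▸ Nat.gcd_dvd_right _ _)
  refine Nat.eq_of_mul_eq_mul_left (Nat.card_pos (α := Fˣ)) ?_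
  rw [card_units_mul_card_resPairs_eq_sum_divisors, ← Finset.sum_subset hsub, Finset.mul_sum]
  · refine Finset.sum_congr rfl fun d hd => ?_
    have hdn : d ∣ n := (Nat.dvd_of_mem_divisors hd).trans (Nat.gcd_dvd_left _ _)
    rw [sum_card_units_adjoinRoot_isMonicPow F hn (Nat.mul_div_cancel' hdn), mul_left_comm]
  · intro d hd hdn
    have hnot (φ : MonicDegreeEq F n) : ¬ IsMonicPow d φ.1 := fun h => hdn <| Nat.mem_divisors.2
      ⟨Nat.dvd_gcd (φ.natDegree ▸ h.dvd_natDegree) (Nat.card_units F ▸ Nat.dvd_of_mem_divisors hd),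
        Nat.gcd_ne_zero_left hn⟩
    rw [Finset.filter_false_of_mem fun φ _ => hnot φ, Finset.sum_empty, mul_zero]

/-- for `n` prime and `q ≡ 1 (mod n)`,
`|Res_n(F_q)| = q^{2n-1} + (n-1)·qⁿ`. -/
theorem stmt_5 (F : Type*) [Field F] [Fintype F] (q : ℕ) (hq : Fintype.card F = q)
    (n : ℕ) (hp : n.Prime) (hmod : n ∣ (q - 1)) :
    Nat.card (ResPairs F n) = q ^ (2 * n - 1) + (n - 1) * q ^ n := by
  rw [stmt_5_general F hp.ne_zero, Nat.card_eq_fintype_card, hq, Nat.gcd_eq_left hmod,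
    hp.sum_divisors, Nat.totient_prime hp, Nat.totient_one, Nat.div_self hp.pos, Nat.div_one,
    Nat.add_sub_cancel, one_mul, ← two_mul, add_comm]
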